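/- arXiv:2312.16426 — 3 statements merged into one kernel-verified Lean document; each statement's English description precedes it below -/
import Mathlib

section
/- Assume hypothesis (H3) and let 1 < μ < 2. The Fredholm integral equation u(x) = −(κ(ψ(x)−ψ_a)^{μ−1}/(2Γ(μ))) ∫_a^b ψ'(τ)(ψ_b−ψ(τ)) f(τ, u(τ)) dτ + (1/Γ(μ)) ∫_a^x ψ'(τ)(ψ(x)−ψ(τ))^{μ−1} f(τ, u(τ)) dτ possesses a unique solution u ∈ C[a,b]. -/
open MeasureTheory Set

noncomputable def KK (a b μ : ℝ) (ψ : ℝ → ℝ) (g : ℝ → ℝ) (x : ℝ) : ℝ :=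
  -(2 / (ψ b - ψ a) * (ψ x - ψ a) ^ (μ - 1) / (2 * Real.Gamma μ)) *
      (∫ τ in a..b, deriv ψ τ * (ψ b - ψ τ) * g τ) +
    (1 / Real.Gamma μ) *
      ∫ τ in a..x, deriv ψ τ * (ψ x - ψ τ) ^ (μ - 1) * g τ

lemma KK_congr (a b μ : ℝ) (ψ g h : ℝ → ℝ) (hgh : ∀ x ∈ Icc a b, g x = h x)
    (x : ℝ) (hx : x ∈ Icc a b) : KK a b μ ψ g x = KK a b μ ψ h x := by
  have hab : a ≤ b := hx.1.trans hx.2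
  unfold KK
  congr 2
  · apply intervalIntegral.integral_congr
    intro t ht
    rw [uIcc_of_le hab] at ht
    simp only [hgh t ht]
  · apply intervalIntegral.integral_congr
    intro t ht
    rw [uIcc_of_le hx.1] at ht
    simp only [hgh t ⟨ht.1, ht.2.trans hx.2⟩]

lemma KK_cont (a b μ : ℝ) (hμ : 1 < μ) (ψ g : ℝ → ℝ) (hψ : ContDiff ℝ 1 ψ) (hg : Continuous g) :
    Continuous (KK a b μ ψ g) := by
  have hc := hψ.continuous
  have hd : Continuous (deriv ψ) := hψ.continuous_deriv le_rfl
  have hr : Continuous (fun x : ℝ => x ^ (μ - 1)) := Real.continuous_rpow_const (by linarith)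
  have h1 : Continuous (fun x => (ψ x - ψ a) ^ (μ - 1)) :=
    hr.comp (hc.sub continuous_const)
  have h2 : Continuous (fun x => ∫ τ in a..x, deriv ψ τ * (ψ x - ψ τ) ^ (μ - 1) * g τ) := by
    apply intervalIntegral.continuous_parametric_intervalIntegral_of_continuous
      (f := fun x τ => deriv ψ τ * (ψ x - ψ τ) ^ (μ - 1) * g τ) (s := fun x => x) _ continuous_id
    have h3 : Continuous (fun p : ℝ × ℝ => (ψ p.1 - ψ p.2) ^ (μ - 1)) :=
      hr.comp ((hc.comp continuous_fst).sub (hc.comp continuous_snd))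
    exact ((hd.comp continuous_snd).mul h3).mul (hg.comp continuous_snd)
  unfold KK
  fun_prop

lemma int1 (a x μ : ℝ) (hμ : 1 < μ) (ψ : ℝ → ℝ) (hψ : ContDiff ℝ 1 ψ) :
    ∫ τ in a..x, deriv ψ τ * (ψ x - ψ τ) ^ (μ - 1) = (ψ x - ψ a) ^ μ / μ := by
  have hc := hψ.continuous
  have hd : Continuous (deriv ψ) := hψ.continuous_deriv le_rfl
  have hr : Continuous (fun x : ℝ => x ^ (μ - 1)) := Real.continuous_rpow_const (by linarith)
  rw [intervalIntegral.integral_eq_sub_of_hasDerivAt (f := fun τ => -((ψ x - ψ τ) ^ μ / μ))]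
  · rw [sub_self, Real.zero_rpow (by linarith)]; ring
  · intro t _
    have h := (hψ.differentiable one_ne_zero t).hasDerivAt
    have := ((((h.const_sub (ψ x)).rpow_const (p := μ) (Or.inr hμ.le))).div_const μ).neg
    have e : deriv ψ t * (ψ x - ψ t) ^ (μ - 1) = -(-deriv ψ t * μ * (ψ x - ψ t) ^ (μ - 1) / μ) := by
      have : μ ≠ 0 := by linarith
      field_simp
    rw [e]
    exact this
  · exact (hd.mul (hr.comp (continuous_const.sub hc))).intervalIntegrable _ _

lemma wbound (a x M : ℝ) (hax : a ≤ x) (w g : ℝ → ℝ) (hw : Continuous w)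
    (hw0 : ∀ t ∈ Icc a x, 0 ≤ w t) (hM : ∀ t ∈ Icc a x, |g t| ≤ M) :
    |∫ τ in a..x, w τ * g τ| ≤ (∫ τ in a..x, w τ) * M := by
  rw [← intervalIntegral.integral_mul_const]
  apply intervalIntegral.norm_integral_le_of_norm_le (f := fun τ => w τ * g τ) hax
  · refine Filter.Eventually.of_forall fun t ht => ?_
    have ht' : t ∈ Icc a x := ⟨ht.1.le, ht.2⟩
    rw [Real.norm_eq_abs, abs_mul, abs_of_nonneg (hw0 t ht')]
    exact mul_le_mul_of_nonneg_left (hM t ht') (hw0 t ht')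
  · exact (hw.mul continuous_const).intervalIntegrable _ _

lemma KK_sub (a b μ : ℝ) (hμ : 1 < μ) (ψ g h : ℝ → ℝ) (hψ : ContDiff ℝ 1 ψ) (hg : Continuous g)
    (hh : Continuous h) (x : ℝ) :
    KK a b μ ψ g x - KK a b μ ψ h x = KK a b μ ψ (fun t => g t - h t) x := by
  have hc := hψ.continuous
  have hd : Continuous (deriv ψ) := hψ.continuous_deriv le_rfl
  have hr : Continuous (fun x : ℝ => x ^ (μ - 1)) := Real.continuous_rpow_const (by linarith)
  have h3 : Continuous (fun τ => (ψ x - ψ τ) ^ (μ - 1)) := hr.comp (continuous_const.sub hc)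
  unfold KK
  simp only [mul_sub]
  rw [intervalIntegral.integral_sub, intervalIntegral.integral_sub]
  · ring
  all_goals apply Continuous.intervalIntegrable; fun_prop

lemma KK_bound (a b μ M : ℝ) (hab : a < b) (hμ : 1 < μ) (ψ g : ℝ → ℝ) (hψ : ContDiff ℝ 1 ψ)
    (hmono : StrictMonoOn ψ (Icc a b)) (hψpos : ∀ x ∈ Icc a b, 0 < deriv ψ x)
    (hM0 : 0 ≤ M)
    (hM : ∀ t ∈ Icc a b, |g t| ≤ M) (x : ℝ) (hx : x ∈ Icc a b) :
    |KK a b μ ψ g x| ≤ (ψ b - ψ a) ^ μ * (2 + μ) / (2 * Real.Gamma (μ + 1)) * M := by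
  have hc := hψ.continuous
  have hd : Continuous (deriv ψ) := hψ.continuous_deriv le_rfl
  have hr : Continuous (fun x : ℝ => x ^ (μ - 1)) := Real.continuous_rpow_const (by linarith)
  have h3 : Continuous (fun τ => (ψ x - ψ τ) ^ (μ - 1)) := hr.comp (continuous_const.sub hc)
  have ha : a ∈ Icc a b := ⟨le_rfl, hab.le⟩
  have hb : b ∈ Icc a b := ⟨hab.le, le_rfl⟩
  have hL : 0 < ψ b - ψ a := sub_pos.2 (hmono ha hb hab)
  have hΓ : 0 < Real.Gamma μ := Real.Gamma_pos_of_pos (by linarith)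
  have hxa : 0 ≤ ψ x - ψ a := sub_nonneg.2 (hmono.monotoneOn ha hx hx.1)
  have hxb : ψ x - ψ a ≤ ψ b - ψ a := sub_le_sub_right (hmono.monotoneOn hx hb hx.2) _
  have i1 := wbound a b M hab.le (fun τ => deriv ψ τ * (ψ b - ψ τ)) g (by fun_prop)
    (fun t ht => mul_nonneg (hψpos t ht).le (sub_nonneg.2 (hmono.monotoneOn ht hb ht.2))) hM
  have i2 := wbound a x M hx.1 (fun τ => deriv ψ τ * (ψ x - ψ τ) ^ (μ - 1)) g (by fun_prop)
    (fun t ht => mul_nonneg (hψpos t ⟨ht.1, ht.2.trans hx.2⟩).le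
      (Real.rpow_nonneg (sub_nonneg.2 (hmono.monotoneOn ⟨ht.1, ht.2.trans hx.2⟩ hx ht.2)) _))
    (fun t ht => hM t ⟨ht.1, ht.2.trans hx.2⟩)
  rw [int1 a x μ hμ ψ hψ] at i2
  have e1 : ∫ τ in a..b, deriv ψ τ * (ψ b - ψ τ) = (ψ b - ψ a) ^ 2 / 2 := by
    have := int1 a b 2 (by norm_num) ψ hψ
    norm_num at this
    exact this
  rw [e1] at i1
  set L := ψ b - ψ a
  have p1 : (ψ x - ψ a) ^ (μ - 1) ≤ L ^ (μ - 1) := Real.rpow_le_rpow hxa hxb (by linarith)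
  have p2 : (ψ x - ψ a) ^ μ ≤ L ^ μ := Real.rpow_le_rpow hxa hxb (by linarith)
  have p0 : 0 ≤ (ψ x - ψ a) ^ (μ - 1) := Real.rpow_nonneg hxa _
  have pL : L ^ μ = L ^ (μ - 1) * L := by
    rw [← Real.rpow_add_one hL.ne']; congr 1; ring
  rw [Real.Gamma_add_one (by linarith)]
  unfold KK
  refine (abs_add_le _ _).trans ?_
  rw [abs_mul, abs_mul, abs_neg, abs_of_nonneg (by positivity), abs_of_nonneg (a := 1 / Real.Gamma μ) (by positivity)]
  have hμ0 : 0 < μ := by linarith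
  calc _ ≤ 2 / L * L ^ (μ - 1) / (2 * Real.Gamma μ) * (L ^ 2 / 2 * M) +
        1 / Real.Gamma μ * (L ^ μ / μ * M) := by
        have i2' := i2.trans (show (ψ x - ψ a) ^ μ / μ * M ≤ L ^ μ / μ * M by gcongr)
        gcongr
    _ = _ := by
        rw [pL]; field_simp; ring

theorem stmt_6
    (a b CL μ : ℝ) (ψ : ℝ → ℝ) (f : ℝ → ℝ → ℝ)
    (hab : a < b)
    (hψ : ContDiff ℝ 1 ψ)
    (hmono : StrictMonoOn ψ (Icc a b))
    (hψpos : ∀ x ∈ Icc a b, 0 < deriv ψ x)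
    (hμ1 : 1 < μ) (hμ2 : μ < 2)
    (hfc : ContinuousOn (fun p : ℝ × ℝ => f p.1 p.2) (Icc a b ×ˢ (univ : Set ℝ)))
    (hLip : ∀ x ∈ Icc a b, ∀ y₁ y₂ : ℝ, |f x y₁ - f x y₂| ≤ CL * |y₁ - y₂|)
    (hCL : CL < (2 / (ψ b - ψ a)) ^ μ * Real.Gamma (μ + 1) / (2 ^ (μ - 1) * (2 + μ))) :
    ∃ u : ℝ → ℝ,
      (ContinuousOn u (Icc a b) ∧
        ∀ x ∈ Icc a b,
          u x = -(2 / (ψ b - ψ a) * (ψ x - ψ a) ^ (μ - 1) / (2 * Real.Gamma μ)) *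
              (∫ τ in a..b, deriv ψ τ * (ψ b - ψ τ) * f τ (u τ)) +
            (1 / Real.Gamma μ) *
              ∫ τ in a..x, deriv ψ τ * (ψ x - ψ τ) ^ (μ - 1) * f τ (u τ)) ∧
      ∀ v : ℝ → ℝ,
        (ContinuousOn v (Icc a b) ∧
          ∀ x ∈ Icc a b,
            v x = -(2 / (ψ b - ψ a) * (ψ x - ψ a) ^ (μ - 1) / (2 * Real.Gamma μ)) *
                (∫ τ in a..b, deriv ψ τ * (ψ b - ψ τ) * f τ (v τ)) +
              (1 / Real.Gamma μ) *
                ∫ τ in a..x, deriv ψ τ * (ψ x - ψ τ) ^ (μ - 1) * f τ (v τ)) →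
        ∀ x ∈ Icc a b, v x = u x := by
  have ha : a ∈ Icc a b := ⟨le_rfl, hab.le⟩
  have hb : b ∈ Icc a b := ⟨hab.le, le_rfl⟩
  have hL : 0 < ψ b - ψ a := sub_pos.2 (hmono ha hb hab)
  have hΓ : 0 < Real.Gamma (μ + 1) := Real.Gamma_pos_of_pos (by linarith)
  have hCL0 : 0 ≤ CL := by
    have := (abs_nonneg _).trans (hLip a ha 1 0)
    simpa using this
  let Q : ℝ := (ψ b - ψ a) ^ μ * (2 + μ) / (2 * Real.Gamma (μ + 1))
  have hQ0 : 0 < Q := by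
    have : 0 < 2 + μ := by linarith
    positivity
  have hQ : Q * CL < 1 := by
    have hLμ : 0 < (ψ b - ψ a) ^ μ := by positivity
    have h2μ : 0 < 2 + μ := by linarith
    have e : (2 / (ψ b - ψ a)) ^ μ * Real.Gamma (μ + 1) / (2 ^ (μ - 1) * (2 + μ)) = 1 / Q := by
      have h2 : (2:ℝ) ^ μ = 2 ^ (μ - 1) * 2 := by
        rw [← Real.rpow_add_one two_ne_zero]; congr 1; ring
      have h20 : (0:ℝ) < 2 ^ (μ - 1) := by positivity
      rw [Real.div_rpow zero_le_two hL.le, h2]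
      simp only [Q]
      field_simp
    rw [e, lt_div_iff₀ hQ0] at hCL
    linarith
  let G : C(Icc a b, ℝ) → ℝ → ℝ := fun u t =>
    f (projIcc a b hab.le t) (u (projIcc a b hab.le t))
  have hG : ∀ u, Continuous (G u) := by
    intro u
    have h1 : Continuous (fun t => (((projIcc a b hab.le t : Icc a b) : ℝ), u (projIcc a b hab.le t))) :=
      (continuous_subtype_val.comp continuous_projIcc).prodMk (u.continuous.comp continuous_projIcc)
    exact hfc.comp_continuous h1 (fun t => ⟨(projIcc a b hab.le t).2, mem_univ _⟩)
  let T : C(Icc a b, ℝ) → C(Icc a b, ℝ) := fun u =>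
    ⟨fun x => KK a b μ ψ (G u) x, (KK_cont a b μ hμ1 ψ _ hψ (hG u)).comp continuous_subtype_val⟩
  have hT : ContractingWith ⟨Q * CL, by positivity⟩ T := by
    refine ⟨by exact_mod_cast hQ, LipschitzWith.of_dist_le_mul fun u v => ?_⟩
    have hd0 : 0 ≤ dist u v := dist_nonneg
    have hq0 : 0 ≤ Q * CL * dist u v := by positivity
    refine (ContinuousMap.dist_le hq0).2 ?_
    intro x
    rw [Real.dist_eq]
    change |KK a b μ ψ (G u) x - KK a b μ ψ (G v) x| ≤ Q * CL * dist u v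
    rw [KK_sub a b μ hμ1 ψ _ _ hψ (hG u) (hG v), mul_assoc]
    apply KK_bound a b μ _ hab hμ1 ψ _ hψ hmono hψpos (by positivity) _ _ x.2
    intro t ht
    refine (hLip _ (projIcc a b hab.le t).2 _ _).trans ?_
    gcongr
    rw [← Real.dist_eq]
    exact ContinuousMap.dist_apply_le_dist _
  have key : ∀ (u : C(Icc a b, ℝ)) (w : ℝ → ℝ), (∀ x : Icc a b, w x = u x) → ∀ x ∈ Icc a b,
      KK a b μ ψ (fun τ => f τ (w τ)) x = KK a b μ ψ (G u) x := by
    intro u w hw x hx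
    apply KK_congr _ _ _ _ _ _ _ _ hx
    intro t ht
    simp only [G, projIcc_of_mem hab.le ht]
    rw [← hw ⟨t, ht⟩]
  have : Nonempty (Icc a b) := ⟨⟨a, ha⟩⟩
  let U := hT.fixedPoint T
  have hU : T U = U := hT.fixedPoint_isFixedPt
  refine ⟨fun t => U (projIcc a b hab.le t), ⟨?_, ?_⟩, ?_⟩
  · exact (U.continuous.comp continuous_projIcc).continuousOn
  · intro x hx
    have h := key U (fun t => U (projIcc a b hab.le t)) (fun x => by simp) x hx
    refine Eq.trans ?_ h.symm
    change U (projIcc a b hab.le x) = T U ⟨x, hx⟩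
    rw [hU, projIcc_of_mem hab.le hx]
  · rintro v ⟨hvc, hv⟩ x hx
    let V : C(Icc a b, ℝ) := ⟨fun x => v x, continuousOn_iff_continuous_domRestrict.1 hvc⟩
    have hV : T V = V := by
      ext y
      exact ((hv y y.2).trans (key V v (fun _ => rfl) y y.2)).symm
    have hVU : V = U := hT.fixedPoint_unique hV
    change V ⟨x, hx⟩ = U (projIcc a b hab.le x)
    rw [hVU, projIcc_of_mem hab.le hx]
end

section
/- Assume hypothesis (H4) and let 1 < μ < 2. The Fredholm integral equation u(x) = −(κ(ψ(x)−ψ_a)/(2Γ(μ))) ∫_a^b ψ'(τ)(ψ_b−ψ(τ))^{μ−1} f(τ, u(τ)) dτ + (1/Γ(μ)) ∫_a^x ψ'(τ)(ψ(x)−ψ(τ))^{μ−1} f(τ, u(τ)) dτ possesses a unique solution u ∈ C[a,b]. -/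
open MeasureTheory Set

lemma aux_cont (μ : ℝ) (hμ1 : 1 < μ) (ψ : ℝ → ℝ) (hψ : ContDiff ℝ 1 ψ) (g : ℝ → ℝ)
    (hg : Continuous g) :
    Continuous (fun p : ℝ × ℝ => deriv ψ p.2 * (ψ p.1 - ψ p.2) ^ (μ - 1) * g p.2) := by
  have h1 : Continuous (deriv ψ) := hψ.continuous_deriv le_rfl
  have h2 : Continuous ψ := hψ.continuous
  refine ((h1.comp continuous_snd).mul ?_).mul (hg.comp continuous_snd)
  exact ((h2.comp continuous_fst).sub (h2.comp continuous_snd)).rpow_const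
    (fun _ => Or.inr (by linarith))

lemma aux_cont1 (μ : ℝ) (hμ1 : 1 < μ) (ψ : ℝ → ℝ) (hψ : ContDiff ℝ 1 ψ) (g : ℝ → ℝ)
    (hg : Continuous g) (x : ℝ) :
    Continuous (fun τ : ℝ => deriv ψ τ * (ψ x - ψ τ) ^ (μ - 1) * g τ) :=
  (aux_cont μ hμ1 ψ hψ g hg).comp (Continuous.prodMk_right x)

lemma aux_int (a x μ : ℝ) (hμ1 : 1 < μ) (ψ : ℝ → ℝ) (hψ : ContDiff ℝ 1 ψ) :
    ∫ τ in a..x, deriv ψ τ * (ψ x - ψ τ) ^ (μ - 1) = (ψ x - ψ a) ^ μ / μ := by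
  have hd : ∀ τ ∈ uIcc a x, HasDerivAt (fun τ => -((ψ x - ψ τ) ^ μ / μ))
      (deriv ψ τ * (ψ x - ψ τ) ^ (μ - 1)) τ := by
    intro τ _
    have h1 : HasDerivAt ψ (deriv ψ τ) τ :=
      (hψ.differentiable (by norm_num) τ).hasDerivAt
    have h2 := (((h1.const_sub (ψ x)).rpow_const (p := μ) (Or.inr hμ1.le)).div_const μ).neg
    refine h2.congr_deriv ?_
    field_simp
  have hc := aux_cont1 μ hμ1 ψ hψ (fun _ => 1) continuous_const x
  simp only [mul_one] at hc
  rw [intervalIntegral.integral_eq_sub_of_hasDerivAt hd (hc.intervalIntegrable _ _)]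
  rw [sub_self, Real.zero_rpow (by linarith)]
  ring

lemma aux_bound (a b x μ M : ℝ) (hμ1 : 1 < μ) (ψ : ℝ → ℝ) (hψ : ContDiff ℝ 1 ψ)
    (hmono : StrictMonoOn ψ (Icc a b)) (hψpos : ∀ x ∈ Icc a b, 0 < deriv ψ x)
    (hx : x ∈ Icc a b) (g₁ g₂ : ℝ → ℝ) (h₁ : Continuous g₁) (h₂ : Continuous g₂)
    (hM : ∀ τ ∈ Icc a b, |g₁ τ - g₂ τ| ≤ M) :
    |(∫ τ in a..x, deriv ψ τ * (ψ x - ψ τ) ^ (μ - 1) * g₁ τ) -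
      ∫ τ in a..x, deriv ψ τ * (ψ x - ψ τ) ^ (μ - 1) * g₂ τ| ≤ (ψ x - ψ a) ^ μ / μ * M := by
  rw [← intervalIntegral.integral_sub ((aux_cont1 μ hμ1 ψ hψ g₁ h₁ x).intervalIntegrable _ _)
    ((aux_cont1 μ hμ1 ψ hψ g₂ h₂ x).intervalIntegrable _ _), ← aux_int a x μ hμ1 ψ hψ,
    ← intervalIntegral.integral_mul_const, ← Real.norm_eq_abs]
  refine intervalIntegral.norm_integral_le_of_norm_le hx.1 ?_
    ((aux_cont1 μ hμ1 ψ hψ (fun _ => M) continuous_const x).intervalIntegrable _ _)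
  refine Filter.Eventually.of_forall fun τ hτ => ?_
  have hτ' : τ ∈ Icc a b := ⟨hτ.1.le, hτ.2.trans hx.2⟩
  have hp : 0 ≤ deriv ψ τ * (ψ x - ψ τ) ^ (μ - 1) :=
    mul_nonneg (hψpos τ hτ').le (Real.rpow_nonneg
      (sub_nonneg.2 (hmono.monotoneOn hτ' hx hτ.2)) _)
  rw [← mul_sub, Real.norm_eq_abs, abs_mul, abs_of_nonneg hp]
  exact mul_le_mul_of_nonneg_left (hM τ hτ') hp

/-- The integral operator. -/
noncomputable def auxT (a b μ : ℝ) (ψ g : ℝ → ℝ) (x : ℝ) : ℝ :=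
  -(2 / (ψ b - ψ a) * (ψ x - ψ a) / (2 * Real.Gamma μ)) *
      (∫ τ in a..b, deriv ψ τ * (ψ b - ψ τ) ^ (μ - 1) * g τ) +
    (1 / Real.Gamma μ) * ∫ τ in a..x, deriv ψ τ * (ψ x - ψ τ) ^ (μ - 1) * g τ

lemma auxT_cont (a b μ : ℝ) (hμ1 : 1 < μ) (ψ g : ℝ → ℝ) (hψ : ContDiff ℝ 1 ψ)
    (hg : Continuous g) : Continuous (auxT a b μ ψ g) := by
  have h2 : Continuous ψ := hψ.continuous
  have h3 : Continuous fun x => ∫ τ in a..x, deriv ψ τ * (ψ x - ψ τ) ^ (μ - 1) * g τ :=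
    intervalIntegral.continuous_parametric_intervalIntegral_of_continuous
      (aux_cont μ hμ1 ψ hψ g hg) continuous_id
  unfold auxT
  fun_prop

lemma auxT_congr (a b μ : ℝ) (ψ g₁ g₂ : ℝ → ℝ) (h : ∀ τ ∈ Icc a b, g₁ τ = g₂ τ)
    (hab : a < b) (x : ℝ) (hx : x ∈ Icc a b) : auxT a b μ ψ g₁ x = auxT a b μ ψ g₂ x := by
  have h1 : ∀ y z : ℝ, y ∈ Icc a b → 
      ∫ τ in a..y, deriv ψ τ * (ψ z - ψ τ) ^ (μ - 1) * g₁ τ =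
      ∫ τ in a..y, deriv ψ τ * (ψ z - ψ τ) ^ (μ - 1) * g₂ τ := by
    intro y z hy
    refine intervalIntegral.integral_congr fun τ hτ => ?_
    rw [uIcc_of_le hy.1] at hτ
    simp only [h τ ⟨hτ.1, hτ.2.trans hy.2⟩]
  unfold auxT
  rw [h1 x x hx, h1 b b ⟨hab.le, le_rfl⟩]

lemma auxT_bound (a b x μ M : ℝ) (hab : a < b) (hμ1 : 1 < μ) (ψ : ℝ → ℝ) (hψ : ContDiff ℝ 1 ψ)
    (hmono : StrictMonoOn ψ (Icc a b)) (hψpos : ∀ x ∈ Icc a b, 0 < deriv ψ x)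
    (hx : x ∈ Icc a b) (g₁ g₂ : ℝ → ℝ) (h₁ : Continuous g₁) (h₂ : Continuous g₂) (hM0 : 0 ≤ M)
    (hM : ∀ τ ∈ Icc a b, |g₁ τ - g₂ τ| ≤ M) :
    |auxT a b μ ψ g₁ x - auxT a b μ ψ g₂ x| ≤
      2 * (ψ b - ψ a) ^ μ / Real.Gamma (μ + 1) * M := by
  have ha : a ∈ Icc a b := ⟨le_rfl, hab.le⟩
  have hb : b ∈ Icc a b := ⟨hab.le, le_rfl⟩
  have hL : 0 < ψ b - ψ a := sub_pos.2 (hmono ha hb hab)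
  have hxa : 0 ≤ ψ x - ψ a := sub_nonneg.2 (hmono.monotoneOn ha hx hx.1)
  have hxb : ψ x - ψ a ≤ ψ b - ψ a := by
    have := hmono.monotoneOn hx hb hx.2
    linarith
  have hμ0 : 0 < μ := by linarith
  have hG : 0 < Real.Gamma μ := Real.Gamma_pos_of_pos hμ0
  have B1 := aux_bound a b b μ M hμ1 ψ hψ hmono hψpos hb g₁ g₂ h₁ h₂ hM
  have B2 := aux_bound a b x μ M hμ1 ψ hψ hmono hψpos hx g₁ g₂ h₁ h₂ hM
  have B3 : (ψ x - ψ a) ^ μ / μ * M ≤ (ψ b - ψ a) ^ μ / μ * M := by gcongr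
  unfold auxT
  rw [Real.Gamma_add_one hμ0.ne']
  generalize (∫ τ in a..b, deriv ψ τ * (ψ b - ψ τ) ^ (μ - 1) * g₁ τ) = I1 at *
  generalize (∫ τ in a..b, deriv ψ τ * (ψ b - ψ τ) ^ (μ - 1) * g₂ τ) = I2 at *
  generalize (∫ τ in a..x, deriv ψ τ * (ψ x - ψ τ) ^ (μ - 1) * g₁ τ) = J1 at *
  generalize (∫ τ in a..x, deriv ψ τ * (ψ x - ψ τ) ^ (μ - 1) * g₂ τ) = J2 at *
  set c := (ψ x - ψ a) / (ψ b - ψ a) with hc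
  have hc0 : 0 ≤ c := div_nonneg hxa hL.le
  have hc1 : c ≤ 1 := (div_le_one hL).2 hxb
  have e : -(2 / (ψ b - ψ a) * (ψ x - ψ a) / (2 * Real.Gamma μ)) * I1 + 1 / Real.Gamma μ * J1 -
      (-(2 / (ψ b - ψ a) * (ψ x - ψ a) / (2 * Real.Gamma μ)) * I2 + 1 / Real.Gamma μ * J2)
      = ((J1 - J2) - c * (I1 - I2)) / Real.Gamma μ := by
    rw [hc]; field_simp; ring
  have e2 : 2 * (ψ b - ψ a) ^ μ / (μ * Real.Gamma μ) * M
      = (2 * ((ψ b - ψ a) ^ μ / μ * M)) / Real.Gamma μ := by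
    field_simp
  rw [e, e2, abs_div, abs_of_pos hG]
  gcongr
  have t1 : |c * (I1 - I2)| ≤ |I1 - I2| := by
    rw [abs_mul, abs_of_nonneg hc0]
    exact mul_le_of_le_one_left (abs_nonneg _) hc1
  have t2 := abs_sub (J1 - J2) (c * (I1 - I2))
  linarith

theorem stmt_7
    (a b CL μ : ℝ) (ψ : ℝ → ℝ) (f : ℝ → ℝ → ℝ)
    (hab : a < b)
    (hψ : ContDiff ℝ 1 ψ)
    (hmono : StrictMonoOn ψ (Icc a b))
    (hψpos : ∀ x ∈ Icc a b, 0 < deriv ψ x)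
    (hμ1 : 1 < μ) (hμ2 : μ < 2)
    (hfc : ContinuousOn (fun p : ℝ × ℝ => f p.1 p.2) (Icc a b ×ˢ (univ : Set ℝ)))
    (hLip : ∀ x ∈ Icc a b, ∀ y₁ y₂ : ℝ, |f x y₁ - f x y₂| ≤ CL * |y₁ - y₂|)
    (hCL : CL < (2 / (ψ b - ψ a)) ^ μ * Real.Gamma (μ + 1) / 2 ^ (μ + 1)) :
    ∃ u : ℝ → ℝ,
      (ContinuousOn u (Icc a b) ∧
        ∀ x ∈ Icc a b,
          u x = -(2 / (ψ b - ψ a) * (ψ x - ψ a) / (2 * Real.Gamma μ)) *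
              (∫ τ in a..b, deriv ψ τ * (ψ b - ψ τ) ^ (μ - 1) * f τ (u τ)) +
            (1 / Real.Gamma μ) *
              ∫ τ in a..x, deriv ψ τ * (ψ x - ψ τ) ^ (μ - 1) * f τ (u τ)) ∧
      ∀ v : ℝ → ℝ,
        (ContinuousOn v (Icc a b) ∧
          ∀ x ∈ Icc a b,
            v x = -(2 / (ψ b - ψ a) * (ψ x - ψ a) / (2 * Real.Gamma μ)) *
                (∫ τ in a..b, deriv ψ τ * (ψ b - ψ τ) ^ (μ - 1) * f τ (v τ)) +
              (1 / Real.Gamma μ) *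
                ∫ τ in a..x, deriv ψ τ * (ψ x - ψ τ) ^ (μ - 1) * f τ (v τ)) →
        ∀ x ∈ Icc a b, v x = u x := by
  have ha : a ∈ Icc a b := ⟨le_rfl, hab.le⟩
  have hb : b ∈ Icc a b := ⟨hab.le, le_rfl⟩
  have hL : 0 < ψ b - ψ a := sub_pos.2 (hmono ha hb hab)
  have hμ0 : 0 < μ := by linarith
  have hG : 0 < Real.Gamma (μ + 1) := Real.Gamma_pos_of_pos (by linarith)
  have hC0 : 0 ≤ CL := by
    have := (abs_nonneg _).trans (hLip a ha 1 0)
    simpa using this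
  have hLμ : 0 < (ψ b - ψ a) ^ μ := Real.rpow_pos_of_pos hL _
  set q : ℝ := 2 * (ψ b - ψ a) ^ μ / Real.Gamma (μ + 1) * CL with hq
  have hq0 : 0 ≤ q := by positivity
  have hq1 : q < 1 := by
    rw [Real.div_rpow (by norm_num) hL.le, Real.rpow_add (by norm_num), Real.rpow_one] at hCL
    have h2 : (0:ℝ) < 2 ^ μ := Real.rpow_pos_of_pos (by norm_num) _
    have e : (2:ℝ) ^ μ / (ψ b - ψ a) ^ μ * Real.Gamma (μ + 1) / (2 ^ μ * 2)
        = Real.Gamma (μ + 1) / (2 * (ψ b - ψ a) ^ μ) := by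
      field_simp
    rw [e, lt_div_iff₀ (by positivity)] at hCL
    rw [hq, div_mul_eq_mul_div, div_lt_one hG]
    linarith
  let G : C(Icc a b, ℝ) → ℝ → ℝ := fun u τ => f (projIcc a b hab.le τ) (u (projIcc a b hab.le τ))
  have hGc : ∀ u, Continuous (G u) := by
    intro u
    have hp : Continuous (fun τ : ℝ => (((projIcc a b hab.le τ : Icc a b) : ℝ),
        u (projIcc a b hab.le τ))) := by
      have := continuous_projIcc (h := hab.le)
      fun_prop
    exact hfc.comp_continuous hp (fun τ => ⟨(projIcc a b hab.le τ).2, mem_univ _⟩)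
  let T : C(Icc a b, ℝ) → C(Icc a b, ℝ) := fun u =>
    ⟨fun x => auxT a b μ ψ (G u) x,
      (auxT_cont a b μ hμ1 ψ (G u) hψ (hGc u)).comp continuous_subtype_val⟩
  have hT : ContractingWith ⟨q, hq0⟩ T := by
    refine ⟨by exact_mod_cast hq1, LipschitzWith.of_dist_le_mul fun u v => ?_⟩
    change dist (T u) (T v) ≤ q * dist u v
    rw [ContinuousMap.dist_le (by positivity)]
    intro x
    rw [Real.dist_eq]
    have := auxT_bound a b x μ (CL * dist u v) hab hμ1 ψ hψ hmono hψpos x.2 (G u) (G v)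
      (hGc u) (hGc v) (by positivity) (by
        intro τ _
        refine (hLip _ (projIcc a b hab.le τ).2 _ _).trans ?_
        gcongr
        rw [← Real.dist_eq]
        exact ContinuousMap.dist_apply_le_dist _)
    refine this.trans (le_of_eq ?_)
    rw [hq]; ring
  have key : ∀ (w : ℝ → ℝ) (W : C(Icc a b, ℝ)), (∀ x : Icc a b, W x = w x) →
      ∀ x ∈ Icc a b, auxT a b μ ψ (G W) x = auxT a b μ ψ (fun τ => f τ (w τ)) x := by
    intro w W hw x hx
    refine auxT_congr a b μ ψ _ _ (fun τ hτ => ?_) hab x hx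
    simp only [G, projIcc_of_mem hab.le hτ, hw]
  set U := ContractingWith.fixedPoint T hT with hU
  have hfix : T U = U := hT.fixedPoint_isFixedPt
  have hUe : ∀ x : Icc a b, U x = IccExtend hab.le U x := fun x => by simp
  refine ⟨IccExtend hab.le U, ⟨(U.continuous.Icc_extend').continuousOn, ?_⟩, ?_⟩
  · intro x hx
    have h1 := key _ U hUe x hx
    have h2 : T U ⟨x, hx⟩ = U ⟨x, hx⟩ := by rw [hfix]
    have h3 : T U ⟨x, hx⟩ = auxT a b μ ψ (G U) x := rfl
    have h4 := hUe ⟨x, hx⟩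
    exact (h4.symm.trans (h2.symm.trans (h3.trans h1)))
  · rintro v ⟨hvc, hv⟩ x hx
    let V : C(Icc a b, ℝ) := ⟨fun x => v x, hvc.restrict⟩
    have hV : T V = V := by
      ext y
      exact (key v V (fun _ => rfl) y y.2).trans (hv y y.2).symm
    have : V = U := hT.fixedPoint_unique hV
    rw [← hUe ⟨x, hx⟩, ← this]
    rfl
end

section
/- Let μ > 0 and C > 0 be constants. Assume ξ is a nonnegative, nondecreasing, locally integrable function on [a,b] and η is continuous and nonnegative on [a,b] with η(x) ≤ ξ(x) + C ∫_a^x ψ'(s)(ψ(x)−ψ(s))^{μ−1} η(s) ds for all x ∈ [a,b]. Then for all x ∈ [a,b], η(x) ≤ ξ(x) · E_μ(C Γ(μ)(ψ(x)−ψ_a)^μ), where E_μ(s) = Σ_{k=0}^∞ s^k/Γ(1+kμ) is the Mittag-Leffler function. -/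
open MeasureTheory Set

/-- One-parameter Mittag-Leffler function `E_μ(s) = Σ_{k≥0} s^k / Γ(1 + kμ)`. -/
noncomputable def mittagLeffler (μ s : ℝ) : ℝ := ∑' k : ℕ, s ^ k / Real.Gamma (1 + k * μ)

lemma aux_gamma_lower (t R : ℝ) (ht : 0 ≤ t) (hR : 0 < R) :
    R ^ t * Real.exp (-R) ≤ Real.Gamma (1 + t) := by
  have h1 : (0:ℝ) < 1 + t := by linarith
  rw [Real.Gamma_eq_integral h1, ← integral_exp_neg_Ioi R, ← integral_const_mul]
  have hc := Real.GammaIntegral_convergent h1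
  have hsub : Ioi R ⊆ Ioi (0:ℝ) := Ioi_subset_Ioi hR.le
  calc _ ≤ ∫ x in Ioi R, Real.exp (-x) * x ^ (1 + t - 1) := by
        refine setIntegral_mono_on ((integrableOn_exp_neg_Ioi R).const_mul _)
          (hc.mono_set hsub) measurableSet_Ioi ?_
        intro x hx
        have hx' : R < x := hx
        rw [mul_comm, add_sub_cancel_left]
        gcongr
    _ ≤ _ := by
        refine setIntegral_mono_set hc ?_ hsub.eventuallyLE
        filter_upwards [ae_restrict_mem measurableSet_Ioi] with x hx
        have hx' : 0 < x := hx
        simp only [Pi.zero_apply]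
        positivity

lemma aux_summable (μ z : ℝ) (hμ : 0 < μ) (hz : 0 ≤ z) :
    Summable (fun k : ℕ => z ^ k / Real.Gamma (1 + k * μ)) := by
  set R : ℝ := (2 * z + 1) ^ (1 / μ) with hRdef
  have hR : 0 < R := by positivity
  have hRμ : R ^ μ = 2 * z + 1 := by
    rw [hRdef, ← Real.rpow_mul (by positivity), one_div_mul_cancel hμ.ne', Real.rpow_one]
  refine Summable.of_nonneg_of_le (f := fun k : ℕ => Real.exp R * (1 / 2 : ℝ) ^ k) ?_ ?_ ?_
  · intro k
    have : 0 < Real.Gamma (1 + k * μ) := Real.Gamma_pos_of_pos (by positivity)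
    positivity
  · intro k
    have hg : 0 < Real.Gamma (1 + k * μ) := Real.Gamma_pos_of_pos (by positivity)
    have h := aux_gamma_lower (k * μ) R (by positivity) hR
    rw [mul_comm (k:ℝ) μ, Real.rpow_mul hR.le, hRμ, Real.rpow_natCast, mul_comm μ] at h
    rw [div_le_iff₀ hg]
    calc z ^ k ≤ ((1/2) * (2 * z + 1)) ^ k := by gcongr; linarith
      _ = Real.exp R * (1/2) ^ k * ((2 * z + 1) ^ k * Real.exp (-R)) := by
        rw [mul_pow, Real.exp_neg]; field_simp
      _ ≤ _ := by gcongr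
  · exact (summable_geometric_of_lt_one (by norm_num) (by norm_num)).mul_left _

lemma aux_beta (p μ L : ℝ) (hp : 0 ≤ p) (hμ : 0 < μ) (hL : 0 ≤ L) :
    ∫ x in (0:ℝ)..L, x ^ p * (L - x) ^ (μ - 1) =
      L ^ (p + μ) * (Real.Gamma (1 + p) * Real.Gamma μ / Real.Gamma (1 + (p + μ))) := by
  rcases hL.eq_or_lt with rfl | hL
  · rw [Real.zero_rpow (by positivity)]; simp
  have h := Complex.betaIntegral_scaled ((1 + p : ℝ) : ℂ) (μ : ℂ) hL
  rw [Complex.betaIntegral_eq_Gamma_mul_div _ _ (by simp; positivity) (by simpa)] at h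
  have h2 : ∫ x in (0:ℝ)..L, (x : ℂ) ^ (((1 + p : ℝ) : ℂ) - 1) * ((L : ℂ) - x) ^ ((μ : ℂ) - 1) =
      ((∫ x in (0:ℝ)..L, x ^ p * (L - x) ^ (μ - 1) : ℝ) : ℂ) := by
    rw [← intervalIntegral.integral_ofReal]
    refine intervalIntegral.integral_congr ?_
    intro x hx
    rw [uIcc_of_le hL.le] at hx
    simp only
    rw [Complex.ofReal_mul, Complex.ofReal_cpow hx.1, Complex.ofReal_cpow (sub_nonneg.2 hx.2)]
    push_cast
    congr 2
    ring
  rw [h2] at h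
  have h3 : (L:ℂ) ^ (((1 + p : ℝ) : ℂ) + μ - 1) = ((L ^ (p + μ) : ℝ) : ℂ) := by
    rw [Complex.ofReal_cpow hL.le]; congr 1; push_cast; ring
  rw [h3, ← Complex.ofReal_add, Complex.Gamma_ofReal, Complex.Gamma_ofReal,
    Complex.Gamma_ofReal] at h
  rw [← add_assoc]
  exact_mod_cast h

lemma aux_kernel (a y μ p : ℝ) (ψ : ℝ → ℝ) (hay : a ≤ y) (hψ : ContDiff ℝ 1 ψ)
    (hmono : StrictMonoOn ψ (Icc a y)) (hψpos : ∀ x ∈ Icc a y, 0 < deriv ψ x)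
    (hμ : 0 < μ) (hp : 0 ≤ p) :
    IntegrableOn (fun s => deriv ψ s * (ψ y - ψ s) ^ (μ - 1) * (ψ s - ψ a) ^ p) (Icc a y) ∧
    ∫ s in Icc a y, deriv ψ s * (ψ y - ψ s) ^ (μ - 1) * (ψ s - ψ a) ^ p =
      (ψ y - ψ a) ^ (p + μ) *
        (Real.Gamma (1 + p) * Real.Gamma μ / Real.Gamma (1 + (p + μ))) := by
  have hle : ψ a ≤ ψ y := hmono.monotoneOn (left_mem_Icc.2 hay) (right_mem_Icc.2 hay) hay
  have himg : ψ '' Icc a y = Icc (ψ a) (ψ y) :=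
    ContinuousOn.image_Icc_of_monotoneOn hay hψ.continuous.continuousOn hmono.monotoneOn
  have hder : ∀ x ∈ Icc a y, HasDerivWithinAt ψ (deriv ψ x) (Icc a y) x := fun x _ =>
    ((hψ.differentiable (by norm_num)) x).hasDerivAt.hasDerivWithinAt
  let g : ℝ → ℝ := fun u => (u - ψ a) ^ p * (ψ y - u) ^ (μ - 1)
  have hcongr : ∀ s ∈ Icc a y, |deriv ψ s| • g (ψ s) =
      deriv ψ s * (ψ y - ψ s) ^ (μ - 1) * (ψ s - ψ a) ^ p := by
    intro s hs
    rw [abs_of_pos (hψpos s hs)]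
    simp only [g, smul_eq_mul]; ring
  have hgint : IntegrableOn g (Icc (ψ a) (ψ y)) := by
    rw [← intervalIntegrable_iff_integrableOn_Icc_of_le hle]
    refine IntervalIntegrable.continuousOn_mul ?_ ?_
    · have h0 : IntervalIntegrable (fun x : ℝ => x ^ (μ - 1)) volume (ψ y - ψ a) (ψ y - ψ y) :=
        intervalIntegral.intervalIntegrable_rpow' (by linarith)
      simpa using h0.comp_sub_left (ψ y)
    · refine ContinuousOn.rpow_const (by fun_prop) (fun _ _ => Or.inr hp)
  have hgval : ∫ u in Icc (ψ a) (ψ y), g u = (ψ y - ψ a) ^ (p + μ) *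
        (Real.Gamma (1 + p) * Real.Gamma μ / Real.Gamma (1 + (p + μ))) := by
    rw [integral_Icc_eq_integral_Ioc, ← intervalIntegral.integral_of_le hle,
      ← aux_beta p μ _ hp hμ (sub_nonneg.2 hle)]
    have := intervalIntegral.integral_comp_sub_right (a := ψ a) (b := ψ y)
      (fun x => x ^ p * ((ψ y - ψ a) - x) ^ (μ - 1)) (ψ a)
    rw [sub_self] at this
    rw [← this]
    simp [g]
  constructor
  · rw [← integrableOn_congr_fun hcongr measurableSet_Icc,
      ← integrableOn_image_iff_integrableOn_abs_deriv_smul measurableSet_Icc hder hmono.injOn, himg]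
    exact hgint
  · rw [← setIntegral_congr_fun measurableSet_Icc hcongr,
      ← integral_image_eq_integral_abs_deriv_smul measurableSet_Icc hder hmono.injOn, himg]
    exact hgval

lemma aux_step (a y μ C K : ℝ) (ψ η : ℝ → ℝ) (hay : a ≤ y) (hψ : ContDiff ℝ 1 ψ)
    (hmono : StrictMonoOn ψ (Icc a y)) (hψpos : ∀ x ∈ Icc a y, 0 < deriv ψ x)
    (hμ : 0 < μ) (hC : 0 < C) (hη0 : ∀ x ∈ Icc a y, 0 ≤ η x)
    (hineq : η y ≤ K + C * ∫ s in a..y, deriv ψ s * (ψ y - ψ s) ^ (μ - 1) * η s)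
    (n : ℕ) (e : ℕ → ℝ)
    (hb : ∀ s ∈ Icc a y, η s ≤ ∑ k ∈ Finset.range n, e k * (ψ s - ψ a) ^ (k * μ)) :
    η y ≤ K + ∑ k ∈ Finset.range n, e k * (C * ((ψ y - ψ a) ^ (k * μ + μ) *
        (Real.Gamma (1 + k * μ) * Real.Gamma μ / Real.Gamma (1 + (k * μ + μ))))) := by
  refine hineq.trans ?_
  have hk := fun k : ℕ => aux_kernel a y μ (k * μ) ψ hay hψ hmono hψpos hμ (by positivity)
  have hsum : ∑ k ∈ Finset.range n, e k * (C * ((ψ y - ψ a) ^ (k * μ + μ) *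
        (Real.Gamma (1 + k * μ) * Real.Gamma μ / Real.Gamma (1 + (k * μ + μ))))) =
      C * ∫ s in Icc a y, ∑ k ∈ Finset.range n,
        e k * (deriv ψ s * (ψ y - ψ s) ^ (μ - 1) * (ψ s - ψ a) ^ (k * μ)) := by
    rw [integral_finsetSum _ (fun k _ => (hk k).1.const_mul (e k)), Finset.mul_sum]
    refine Finset.sum_congr rfl fun k _ => ?_
    rw [integral_const_mul, (hk k).2]; ring
  rw [hsum, intervalIntegral.integral_of_le hay, ← integral_Icc_eq_integral_Ioc]
  refine add_le_add le_rfl (mul_le_mul_of_nonneg_left ?_ hC.le)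
  have hpos : ∀ s ∈ Icc a y, 0 ≤ deriv ψ s * (ψ y - ψ s) ^ (μ - 1) := fun s hs =>
    mul_nonneg (hψpos s hs).le (Real.rpow_nonneg
      (sub_nonneg.2 (hmono.monotoneOn hs (right_mem_Icc.2 hay) hs.2)) _)
  refine integral_mono_of_nonneg ?_
    (integrable_finsetSum _ (fun k _ => (hk k).1.const_mul (e k))) ?_
  · filter_upwards [ae_restrict_mem measurableSet_Icc] with s hs
    exact mul_nonneg (hpos s hs) (hη0 s hs)
  · filter_upwards [ae_restrict_mem measurableSet_Icc] with s hs
    refine (mul_le_mul_of_nonneg_left (hb s hs) (hpos s hs)).trans (le_of_eq ?_)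
    rw [Finset.mul_sum]
    exact Finset.sum_congr rfl fun k _ => by ring

theorem stmt_11
    (a b μ C : ℝ) (ψ ξ η : ℝ → ℝ)
    (hab : a < b)
    (hψ : ContDiff ℝ 1 ψ)
    (hmono : StrictMonoOn ψ (Icc a b))
    (hψpos : ∀ x ∈ Icc a b, 0 < deriv ψ x)
    (hμ : 0 < μ) (hC : 0 < C)
    (hξ0 : ∀ x ∈ Icc a b, 0 ≤ ξ x)
    (hξmono : MonotoneOn ξ (Icc a b))
    (hξint : LocallyIntegrableOn ξ (Icc a b) volume)
    (hη : ContinuousOn η (Icc a b))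
    (hη0 : ∀ x ∈ Icc a b, 0 ≤ η x)
    (hineq : ∀ x ∈ Icc a b,
      η x ≤ ξ x + C * ∫ s in a..x, deriv ψ s * (ψ x - ψ s) ^ (μ - 1) * η s) :
    ∀ x ∈ Icc a b,
      η x ≤ ξ x * mittagLeffler μ (C * Real.Gamma μ * (ψ x - ψ a) ^ μ) := by
  intro x hx
  obtain ⟨M, hM⟩ := (isCompact_Icc.bddAbove_image hη : BddAbove (η '' Icc a b))
  set K := ξ x with hK
  let d : ℕ → ℝ := fun k => (C * Real.Gamma μ) ^ k / Real.Gamma (1 + k * μ)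
  let e : ℕ → ℕ → ℝ := fun n k => (if k < n then K else M) * d k
  have hΓ : ∀ k : ℕ, 0 < Real.Gamma (1 + k * μ) := fun k => Real.Gamma_pos_of_pos (by positivity)
  have key : ∀ n : ℕ, ∀ y ∈ Icc a x,
      η y ≤ ∑ k ∈ Finset.range (n + 1), e n k * (ψ y - ψ a) ^ (k * μ) := by
    intro n
    induction n with
    | zero =>
      intro y hy
      simpa [e, d] using hM ⟨y, ⟨hy.1, hy.2.trans hx.2⟩, rfl⟩
    | succ n ih =>
      intro y hy
      have hyb : y ∈ Icc a b := ⟨hy.1, hy.2.trans hx.2⟩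
      have hsub : Icc a y ⊆ Icc a b := Icc_subset_Icc_right hyb.2
      have h1 : η y ≤ K + C * ∫ s in a..y, deriv ψ s * (ψ y - ψ s) ^ (μ - 1) * η s := by
        have := hineq y hyb
        have := hξmono hyb hx hy.2
        linarith
      refine (aux_step a y μ C K ψ η hy.1 hψ (hmono.mono hsub) (fun s hs => hψpos s (hsub hs)) hμ hC
        (fun s hs => hη0 s (hsub hs)) h1 (n + 1) (e n)
        (fun s hs => ih s ⟨hs.1, hs.2.trans hy.2⟩)).trans (le_of_eq ?_)
      rw [Finset.sum_range_succ' _ (n + 1), add_comm]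
      congr 1
      · refine Finset.sum_congr rfl fun k _ => ?_
        have h2 : ((k + 1 : ℕ) : ℝ) * μ = k * μ + μ := by push_cast; ring
        have h3 := hΓ k
        have h4 := hΓ (k + 1)
        simp only [e, d, Nat.add_lt_add_iff_right]
        rw [h2] at h4 ⊢
        rw [pow_succ]
        field_simp
      · simp [e, d]
  have hz0 : 0 ≤ ψ x - ψ a :=
    sub_nonneg.2 (hmono.monotoneOn (left_mem_Icc.2 hab.le) hx hx.1)
  set Z := C * Real.Gamma μ * (ψ x - ψ a) ^ μ with hZ
  have hZ0 : 0 ≤ Z := by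
    have := Real.Gamma_pos_of_pos hμ
    positivity
  have hs := aux_summable μ Z hμ hZ0
  have hterm : ∀ k : ℕ, d k * (ψ x - ψ a) ^ (k * μ) = Z ^ k / Real.Gamma (1 + k * μ) := by
    intro k
    simp only [d]
    rw [hZ, mul_pow (C * Real.Gamma μ), ← Real.rpow_natCast ((ψ x - ψ a) ^ μ), ← Real.rpow_mul hz0,
      mul_comm μ]
    ring
  have hfin : ∀ n : ℕ, η x ≤ K * ∑ k ∈ Finset.range n, Z ^ k / Real.Gamma (1 + k * μ) +
      M * (Z ^ n / Real.Gamma (1 + n * μ)) := by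
    intro n
    refine (key n x (right_mem_Icc.2 hx.1)).trans (le_of_eq ?_)
    rw [Finset.sum_range_succ, Finset.mul_sum]
    congr 1
    · refine Finset.sum_congr rfl fun k hk => ?_
      rw [← hterm]
      simp only [e, if_pos (Finset.mem_range.1 hk)]; ring
    · rw [← hterm]
      simp only [e, lt_irrefl, if_false]; ring
  have hlim := (hs.hasSum.tendsto_sum_nat.const_mul K).add (hs.tendsto_atTop_zero.const_mul M)
  rw [mul_zero, add_zero] at hlim
  exact ge_of_tendsto' hlim hfin
end
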